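/- Let (Ω, 𝒜, μ) be a measure space, p ∈ [1,∞), and T a positive C₀-semigroup on L_p(μ) with generator A. For every locally measurable V : Ω → [0,∞], the strong limit T_V(t) := s-lim_{n→∞} e^{t(A − V∧n)} exists for every t ≥ 0 (since the sequence of positive operators e^{t(A − V∧n)} is decreasing in n and bounded below by 0), and the family (T_V(t))_{t≥0} thus defined is a one-parameter semigroup: T_V(0) = I and T_V(s+t) = T_V(s)T_V(t) for all s, t ≥ 0. -/

import Mathlib

open MeasureTheory Filter Topology ENNReal

noncomputable section

namespace Absorption

variable {E : Type*} [NormedAddCommGroup E] [NormedSpace ℝ E]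

/-- A one-parameter semigroup of bounded operators (for nonnegative times). -/
def IsSemigroup (T : ℝ → E →L[ℝ] E) : Prop :=
  T 0 = ContinuousLinearMap.id ℝ E ∧
    ∀ s t : ℝ, 0 ≤ s → 0 ≤ t → T (s + t) = (T s).comp (T t)

/-- A `C₀`-semigroup: a one-parameter semigroup which is strongly continuous on `[0, ∞)`. -/
def IsC0Semigroup (T : ℝ → E →L[ℝ] E) : Prop :=
  IsSemigroup T ∧ ∀ f : E, ContinuousOn (fun t => T t f) (Set.Ici (0 : ℝ))

/-- `(f, g)` belongs to the graph of the generator of the semigroup `T`. -/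
def InGenerator (T : ℝ → E →L[ℝ] E) (f g : E) : Prop :=
  Tendsto (fun t : ℝ => t⁻¹ • (T t f - f)) (𝓝[>] (0 : ℝ)) (𝓝 g)

variable {Ω : Type*} [MeasurableSpace Ω]

/-- A function into a measurable space is *locally measurable* (w.r.t. `μ`) if on every set of
finite measure it coincides a.e. with a measurable function. -/
def LocallyMeasurable {α : Type*} [MeasurableSpace α] (μ : Measure Ω) (V : Ω → α) : Prop :=
  ∀ B : Set Ω, MeasurableSet B → μ B < ∞ →
    ∃ g : Ω → α, Measurable g ∧ ∀ᵐ ω ∂(μ.restrict B), V ω = g ω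

/-- A set is a local `μ`-null set if its intersection with every measurable set of finite
measure is null. -/
def IsLocalNullSet (μ : Measure Ω) (N : Set Ω) : Prop :=
  ∀ B : Set Ω, MeasurableSet B → μ B < ∞ → μ (N ∩ B) = 0

/-- Positivity of a family of operators on `L_p` (for positive times). -/
def IsPositiveSG {p : ℝ≥0∞} {μ : Measure Ω} [Fact (1 ≤ p)]
    (T : ℝ → Lp ℝ p μ →L[ℝ] Lp ℝ p μ) : Prop :=
  ∀ t : ℝ, 0 ≤ t → ∀ f : Lp ℝ p μ, 0 ≤ f → 0 ≤ T t f

/-- A band projection on the Banach lattice `L_p(μ)`: an idempotent operator `P`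
with `0 ≤ P f ≤ f` for all `f ≥ 0`. -/
def IsBandProjection {p : ℝ≥0∞} {μ : Measure Ω} [Fact (1 ≤ p)]
    (P : Lp ℝ p μ →L[ℝ] Lp ℝ p μ) : Prop :=
  P.comp P = P ∧ ∀ f : Lp ℝ p μ, 0 ≤ f → 0 ≤ P f ∧ P f ≤ f

/-- `S = (e^{t(A−W)})_{t ≥ 0}`: `S` is the `C₀`-semigroup whose generator is `A - W`,
where `A` is the generator of `T` and the bounded function `W` acts by multiplication. -/
def IsPerturbedSG (μ : Measure Ω) (p : ℝ≥0∞) [Fact (1 ≤ p)]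
    (T S : ℝ → Lp ℝ p μ →L[ℝ] Lp ℝ p μ) (W : Ω → ℝ) : Prop :=
  IsC0Semigroup S ∧
    ∀ f g : Lp ℝ p μ, InGenerator S f g ↔
      ∃ g₀ : Lp ℝ p μ, InGenerator T f g₀ ∧
        ⇑g =ᵐ[μ] fun ω => g₀ ω - W ω * f ω

/-- Same as `IsPerturbedSG`, for semigroups acting on a subspace `F` of `L_p(μ)`. -/
def IsPerturbedSGSub (μ : Measure Ω) (p : ℝ≥0∞) [Fact (1 ≤ p)] (F : Submodule ℝ (Lp ℝ p μ))
    (T S : ℝ → F →L[ℝ] F) (W : Ω → ℝ) : Prop :=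
  IsC0Semigroup S ∧
    ∀ f g : F, InGenerator S f g ↔
      ∃ g₀ : F, InGenerator T f g₀ ∧
        ⇑(g : Lp ℝ p μ) =ᵐ[μ] fun ω => (g₀ : Lp ℝ p μ) ω - W ω * (f : Lp ℝ p μ) ω

/-- The truncation `V ∧ n` of `V : Ω → [0,∞]`, as a real-valued function. -/
def trunc (V : Ω → ℝ≥0∞) (n : ℕ) : Ω → ℝ := fun ω => (min (V ω) (n : ℝ≥0∞)).toReal

/-- The scalar multiple `ε V` of an absorption rate `V : Ω → [0,∞]`. -/
def smulRate (ε : ℝ) (V : Ω → ℝ≥0∞) : Ω → ℝ≥0∞ := fun ω => ENNReal.ofReal ε * V ω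

/-- The absorption rate `V - V ∧ n` (with value `∞` wherever `V = ∞`). -/
def resid (V : Ω → ℝ≥0∞) (n : ℕ) : Ω → ℝ≥0∞ := fun ω => V ω - min (V ω) (n : ℝ≥0∞)

/-- `TV` is the absorption semigroup `T_V` associated with the rate `V : Ω → [0,∞]`, i.e.
the strong limit `T_V(t) = s-lim_{n→∞} e^{t(A - V∧n)}` (for `t ≥ 0`). -/
def IsAbsorptionSG (μ : Measure Ω) (p : ℝ≥0∞) [Fact (1 ≤ p)]
    (T : ℝ → Lp ℝ p μ →L[ℝ] Lp ℝ p μ) (V : Ω → ℝ≥0∞)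
    (TV : ℝ → Lp ℝ p μ →L[ℝ] Lp ℝ p μ) : Prop :=
  ∃ S : ℕ → ℝ → Lp ℝ p μ →L[ℝ] Lp ℝ p μ,
    (∀ n, IsPerturbedSG μ p T (S n) (trunc V n)) ∧
    ∀ t : ℝ, 0 ≤ t → ∀ f, Tendsto (fun n => S n t f) atTop (𝓝 (TV t f))

/-- `V : Ω → [0,∞]` is `T`-admissible: `V` is locally measurable, the strong limits
`T_V(t) = s-lim_{n→∞} e^{t(A - V∧n)}` exist, and `T_V` is a `C₀`-semigroup. -/
def Admissible (μ : Measure Ω) (p : ℝ≥0∞) [Fact (1 ≤ p)]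
    (T : ℝ → Lp ℝ p μ →L[ℝ] Lp ℝ p μ) (V : Ω → ℝ≥0∞) : Prop :=
  LocallyMeasurable μ V ∧
  ∃ TV, IsAbsorptionSG μ p T V TV ∧ IsC0Semigroup TV

/-- The truncation `(V ∧ n) ∨ (−n)` of an extended-real-valued rate, as a real function. -/
def truncE (V : Ω → EReal) (n : ℕ) : Ω → ℝ :=
  fun ω => (max (min (V ω) (n : EReal)) (-(n : EReal))).toReal

/-- `TV` is the absorption semigroup `T_V` of an extended-real-valued rate `V`:
`T_V(t) = s-lim_{n→∞} e^{t(A - (V∧n)∨(−n))}` (for `t ≥ 0`). -/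
def IsAbsorptionSGE (μ : Measure Ω) (p : ℝ≥0∞) [Fact (1 ≤ p)]
    (T : ℝ → Lp ℝ p μ →L[ℝ] Lp ℝ p μ) (V : Ω → EReal)
    (TV : ℝ → Lp ℝ p μ →L[ℝ] Lp ℝ p μ) : Prop :=
  ∃ S : ℕ → ℝ → Lp ℝ p μ →L[ℝ] Lp ℝ p μ,
    (∀ n, IsPerturbedSG μ p T (S n) (truncE V n)) ∧
    ∀ t : ℝ, 0 ≤ t → ∀ f, Tendsto (fun n => S n t f) atTop (𝓝 (TV t f))

/-- `T`-admissibility for an extended-real-valued absorption rate `V`. -/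
def AdmissibleE (μ : Measure Ω) (p : ℝ≥0∞) [Fact (1 ≤ p)]
    (T : ℝ → Lp ℝ p μ →L[ℝ] Lp ℝ p μ) (V : Ω → EReal) : Prop :=
  LocallyMeasurable μ V ∧
  ∃ TV, IsAbsorptionSGE μ p T V TV ∧ IsC0Semigroup TV

end Absorption

open Absorption

/-!
Let `A` generate `T` and let `B` be bounded. Duhamel's formula
`T(t) - S(t) = ∫₀ᵗ S(t - s) B T(s) ds` for the semigroup `S` generated by `A - B` drives the
argument. Comparing `S` with `R(t) = e^{-ct} T(t)`, where `c ≥ B`, it bounds the negative part of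
`S(t) f`, `f ≥ 0`, by an integral of itself against the positive operators `R(t - s) (c - B)`, so
this negative part vanishes by Gronwall's inequality and `S` is positive. Once positivity is
known, the same formula shows that `S` decreases as `B` increases.

The `p`-th power of the norm of `L_p` is superadditive on the positive cone, so a decreasing
sequence of nonnegative elements is Cauchy. Hence the perturbed semigroups converge strongly, and
the semigroup law passes to the limit by the Banach–Steinhaus theorem.

Multiplication by a locally measurable function makes sense on `L_p`, `p < ∞`, because each
element of `L_p` vanishes outside a σ-finite set.
-/

namespace Absorption

section StrongConvergence

variable {𝕜 E F ι : Type*} [NontriviallyNormedField 𝕜] [NormedAddCommGroup E] [NormedSpace 𝕜 E]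
  [NormedAddCommGroup F] [NormedSpace 𝕜 F] {l : Filter ι}

lemma tendsto_clm_apply_of_norm_le {A : ι → E →L[𝕜] F} {u : ι → E} {x : E} {y : F} {M : ℝ}
    (hM : ∀ᶠ i in l, ‖A i‖ ≤ M) (hu : Tendsto u l (𝓝 x))
    (hA : Tendsto (fun i => A i x) l (𝓝 y)) : Tendsto (fun i => A i (u i)) l (𝓝 y) := by
  have hbound : Tendsto (fun i => M * ‖u i - x‖) l (𝓝 0) := by
    simpa using (tendsto_iff_norm_sub_tendsto_zero.1 hu).const_mul M
  have hdiff : Tendsto (fun i => A i (u i - x)) l (𝓝 0) :=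
    squeeze_zero_norm' (hM.mono fun i hi => (A i).le_of_opNorm_le hi _) hbound
  simpa using hdiff.add hA

lemma tendsto_clm_apply_of_tendsto_pointwise [CompleteSpace E] {A : ℕ → E →L[𝕜] F}
    {L : E →L[𝕜] F} (hA : ∀ x, Tendsto (fun n => A n x) atTop (𝓝 (L x)))
    {u : ℕ → E} {x : E} (hu : Tendsto u atTop (𝓝 x)) :
    Tendsto (fun n => A n (u n)) atTop (𝓝 (L x)) := by
  obtain ⟨M, hM⟩ : ∃ M, ∀ n, ‖A n‖ ≤ M := banach_steinhaus fun y => by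
    obtain ⟨C, hC⟩ := (hA y).norm.bddAbove_range
    exact ⟨C, fun n => hC ⟨n, rfl⟩⟩
  exact tendsto_clm_apply_of_norm_le (Eventually.of_forall hM) hu (hA x)

end StrongConvergence

section Calculus

variable {E : Type*} [NormedAddCommGroup E] [NormedSpace ℝ E]

lemma hasDerivWithinAt_Ioi_comp_add_const {u : ℝ → E} {u' : E} {a c : ℝ}
    (hu : HasDerivWithinAt u u' (Set.Ioi (a + c)) (a + c)) :
    HasDerivWithinAt (fun r => u (r + c)) u' (Set.Ioi a) a := by
  have hmaps : Set.MapsTo (fun r => r + c) (Set.Ioi a) (Set.Ioi (a + c)) := fun r hr =>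
    add_lt_add_left (Set.mem_Ioi.1 hr) c
  simpa only [one_smul, Function.comp_def] using
    hu.scomp a ((hasDerivAt_id' a).add_const c).hasDerivWithinAt hmaps

lemma continuous_intervalIntegral_of_continuousOn {X : Type*} [TopologicalSpace X]
    {F : X → ℝ → E} {a b : ℝ} (hab : a ≤ b)
    (hF : ContinuousOn (Function.uncurry F) (Set.univ ×ˢ Set.Icc a b)) :
    Continuous fun x => ∫ s in a..b, F x s := by
  have hclamp : Continuous (Function.uncurry fun x s => F x (Set.projIcc a b hab s)) :=
    hF.comp_continuous (f := fun q : X × ℝ => (q.1, (Set.projIcc a b hab q.2 : ℝ)))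
      (by fun_prop) fun q => ⟨trivial, (Set.projIcc a b hab q.2).2⟩
  refine (intervalIntegral.continuous_parametric_intervalIntegral_of_continuous' hclamp a b).congr
    fun x => intervalIntegral.integral_congr fun s hs => ?_
  rw [Set.uIcc_of_le hab] at hs
  simp only [Set.projIcc_of_mem hab hs]

lemma intervalIntegral_nonneg_of_forall_Icc [PartialOrder E] [IsOrderedAddMonoid E]
    [IsOrderedModule ℝ E] [ClosedIciTopology E] {u : ℝ → E} {a b : ℝ} (hab : a ≤ b)
    (hu : ∀ s ∈ Set.Icc a b, 0 ≤ u s) : 0 ≤ ∫ s in a..b, u s := by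
  rw [intervalIntegral.integral_of_le hab]
  refine integral_nonneg_of_ae ?_
  filter_upwards [ae_restrict_mem measurableSet_Ioc] with s hs using hu s ⟨hs.1.le, hs.2⟩

lemma eq_zero_of_le_mul_integral {φ : ℝ → ℝ} {a b C : ℝ} (hφ : ContinuousOn φ (Set.Icc a b))
    (hφ₀ : ∀ t ∈ Set.Icc a b, 0 ≤ φ t)
    (hle : ∀ t ∈ Set.Icc a b, φ t ≤ C * ∫ s in a..t, φ s) : ∀ t ∈ Set.Icc a b, φ t = 0 := by
  have hint : ∀ t ∈ Set.Icc a b, IntervalIntegrable φ volume a t := fun t ht =>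
    (hφ.mono (Set.Icc_subset_Icc_right ht.2)).intervalIntegrable_of_Icc ht.1
  have hderiv : ∀ t ∈ Set.Ico a b,
      HasDerivWithinAt (fun t => ∫ s in a..t, φ s) (φ t) (Set.Ici t) t := by
    intro t ht
    have hsub : Set.Ioo t b ⊆ Set.Icc a b := fun s hs => ⟨ht.1.trans hs.1.le, hs.2.le⟩
    refine intervalIntegral.integral_hasDerivWithinAt_right (hint t ⟨ht.1, ht.2.le⟩)
      (t := Set.Ioi t) ?_ ?_
    · exact ⟨Set.Ioo t b, Ioo_mem_nhdsGT ht.2,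
        (hφ.mono hsub).aestronglyMeasurable measurableSet_Ioo⟩
    · exact ((hφ t ⟨ht.1, ht.2.le⟩).mono hsub).mono_of_mem_nhdsWithin (Ioo_mem_nhdsGT ht.2)
  have hprim_nonneg : ∀ t ∈ Set.Icc a b, 0 ≤ ∫ s in a..t, φ s := fun t ht =>
    intervalIntegral.integral_nonneg ht.1 fun s hs => hφ₀ s ⟨hs.1, hs.2.trans ht.2⟩
  have hprim : ∀ t ∈ Set.Icc a b, ∫ s in a..t, φ s = 0 := by
    refine eq_zero_of_abs_deriv_le_mul_abs_self_of_eq_zero_right (K := C) (f' := φ) ?_ hderiv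
      (by simp) fun t ht => ?_
    · intro t ht
      have hab := ht.1.trans ht.2
      rw [← Set.uIcc_of_le hab] at ht ⊢
      exact intervalIntegral.continuousOn_primitive_interval' (hint b ⟨hab, le_rfl⟩)
        Set.left_mem_uIcc t ht
    · have ht' : t ∈ Set.Icc a b := ⟨ht.1, ht.2.le⟩
      rw [Real.norm_of_nonneg (hφ₀ t ht'), Real.norm_of_nonneg (hprim_nonneg t ht')]
      exact hle t ht'
  exact fun t ht => le_antisymm (by simpa [hprim t ht] using hle t ht) (hφ₀ t ht)

end Calculus

section Semigroup

variable {E : Type*} [NormedAddCommGroup E] [NormedSpace ℝ E] {S T : ℝ → E →L[ℝ] E}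

lemma IsSemigroup.apply_add (hT : IsSemigroup T) {s t : ℝ} (hs : 0 ≤ s) (ht : 0 ≤ t) (f : E) :
    T (s + t) f = T s (T t f) := by
  rw [hT.2 s t hs ht, ContinuousLinearMap.comp_apply]

lemma IsSemigroup.of_tendsto [CompleteSpace E] {S : ℕ → ℝ → E →L[ℝ] E}
    (hS : ∀ n, IsSemigroup (S n))
    (hlim : ∀ t, 0 ≤ t → ∀ f, Tendsto (fun n => S n t f) atTop (𝓝 (T t f))) :
    IsSemigroup T := by
  refine ⟨?_, fun s t hs ht => ?_⟩
  · ext f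
    exact tendsto_nhds_unique (hlim 0 le_rfl f) (by simp [(hS _).1])
  · ext f
    refine tendsto_nhds_unique (hlim (s + t) (add_nonneg hs ht) f) ?_
    simp only [fun n => (hS n).apply_add hs ht f]
    exact tendsto_clm_apply_of_tendsto_pointwise (hlim s hs) (hlim t ht f)

lemma IsC0Semigroup.exists_norm_le [CompleteSpace E] (hT : IsC0Semigroup T) (b : ℝ) :
    ∃ M, ∀ t ∈ Set.Icc 0 b, ‖T t‖ ≤ M := by
  obtain ⟨M, hM⟩ := banach_steinhaus (g := fun t : Set.Icc 0 b => T t) fun x => by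
    obtain ⟨C, hC⟩ := isCompact_Icc.exists_bound_of_continuousOn
      ((hT.2 x).mono (Set.Icc_subset_Ici_self : Set.Icc 0 b ⊆ Set.Ici 0))
    exact ⟨C, fun t => hC t t.2⟩
  exact ⟨M, fun t ht => hM ⟨t, ht⟩⟩

lemma IsC0Semigroup.tendsto_apply [CompleteSpace E] (hT : IsC0Semigroup T) {ι : Type*}
    {l : Filter ι} {τ : ι → ℝ} {u : ι → E} {t : ℝ} {x : E} (ht : 0 ≤ t)
    (hτ : Tendsto τ l (𝓝[Set.Ici 0] t)) (hu : Tendsto u l (𝓝 x)) :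
    Tendsto (fun i => T (τ i) (u i)) l (𝓝 (T t x)) := by
  obtain ⟨M, hM⟩ := hT.exists_norm_le (t + 1)
  have hτ_mem : ∀ᶠ i in l, τ i ∈ Set.Icc 0 (t + 1) := by
    filter_upwards [(tendsto_nhdsWithin_iff.1 hτ).2,
      (tendsto_nhdsWithin_iff.1 hτ).1.eventually_lt_const (lt_add_one t)] with i hi hi'
    exact ⟨hi, hi'.le⟩
  exact tendsto_clm_apply_of_norm_le (hτ_mem.mono fun i => hM _) hu ((hT.2 x t ht).tendsto.comp hτ)

lemma IsC0Semigroup.continuousOn_apply [CompleteSpace E] (hT : IsC0Semigroup T) {X : Type*}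
    [TopologicalSpace X] {s : Set X} {τ : X → ℝ} {u : X → E} (hτ : ContinuousOn τ s)
    (hτ₀ : ∀ x ∈ s, 0 ≤ τ x) (hu : ContinuousOn u s) :
    ContinuousOn (fun x => T (τ x) (u x)) s := fun x hx =>
  hT.tendsto_apply (hτ₀ x hx)
    (tendsto_nhdsWithin_iff.2 ⟨hτ x hx, eventually_nhdsWithin_of_forall hτ₀⟩) (hu x hx)

lemma IsC0Semigroup.intervalIntegrable (hT : IsC0Semigroup T) (f : E) {a b : ℝ} (ha : 0 ≤ a)
    (hb : 0 ≤ b) : IntervalIntegrable (fun t => T t f) volume a b :=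
  ((hT.2 f).mono fun _ ht => (le_min ha hb).trans ht.1).intervalIntegrable

lemma inGenerator_iff_hasDerivWithinAt (hT : T 0 = ContinuousLinearMap.id ℝ E) {f g : E} :
    InGenerator T f g ↔ HasDerivWithinAt (fun t => T t f) g (Set.Ioi 0) 0 := by
  rw [hasDerivWithinAt_iff_tendsto_slope' (by simp), InGenerator]
  simp [slope_fun_def, hT]

lemma IsSemigroup.inGenerator_apply (hT : IsSemigroup T) {f g : E} (hfg : InGenerator T f g)
    {s : ℝ} (hs : 0 ≤ s) : InGenerator T (T s f) (T s g) := by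
  refine (((T s).continuous.tendsto g).comp hfg).congr' ?_
  filter_upwards [self_mem_nhdsWithin] with t (ht : 0 < t)
  simp [← hT.apply_add ht.le hs, ← hT.apply_add hs ht.le, add_comm]

lemma IsC0Semigroup.hasDerivWithinAt_integral [CompleteSpace E] (hT : IsC0Semigroup T) (f : E)
    {t : ℝ} (ht : 0 ≤ t) :
    HasDerivWithinAt (fun r => ∫ s in 0..r, T s f) (T t f) (Set.Ioi t) t := by
  have hcont : ContinuousOn (fun s => T s f) (Set.Ioi t) :=
    (hT.2 f).mono fun s hs => ht.trans (Set.mem_Ioi.1 hs).le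
  refine (intervalIntegral.integral_hasDerivWithinAt_right (s := Set.Ici t) (t := Set.Ioi t)
    (hT.intervalIntegrable f le_rfl ht)
    (hcont.stronglyMeasurableAtFilter_nhdsWithin measurableSet_Ioi t)
    ((hT.2 f t ht).mono fun s hs => ht.trans (Set.mem_Ioi.1 hs).le)).mono Set.Ioi_subset_Ici_self

lemma IsC0Semigroup.apply_integral [CompleteSpace E] (hT : IsC0Semigroup T) (f : E) {r t : ℝ}
    (hr : 0 ≤ r) (ht : 0 ≤ t) :
    T r (∫ s in 0..t, T s f) = (∫ s in 0..r + t, T s f) - ∫ s in 0..r, T s f := by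
  calc T r (∫ s in 0..t, T s f)
      = ∫ s in 0..t, T r (T s f) :=
        ((T r).intervalIntegral_comp_comm (hT.intervalIntegrable f le_rfl ht)).symm
    _ = ∫ s in 0..t, T (r + s) f := by
        refine intervalIntegral.integral_congr fun s hs => ?_
        rw [Set.uIcc_of_le ht] at hs
        exact (hT.1.apply_add hr hs.1 f).symm
    _ = ∫ s in r..r + t, T s f := by
        simpa using intervalIntegral.integral_comp_add_left (a := 0) (b := t) (fun s => T s f) r
    _ = (∫ s in 0..r + t, T s f) - ∫ s in 0..r, T s f :=
        (intervalIntegral.integral_interval_sub_left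
          (hT.intervalIntegrable f le_rfl (add_nonneg hr ht))
          (hT.intervalIntegrable f le_rfl hr)).symm

lemma IsC0Semigroup.inGenerator_integral [CompleteSpace E] (hT : IsC0Semigroup T) (f : E) {t : ℝ}
    (ht : 0 ≤ t) : InGenerator T (∫ s in 0..t, T s f) (T t f - f) := by
  have hshift : HasDerivWithinAt (fun r => ∫ s in 0..r + t, T s f) (T t f) (Set.Ioi 0) 0 :=
    hasDerivWithinAt_Ioi_comp_add_const (a := 0)
      (by simpa only [zero_add] using hT.hasDerivWithinAt_integral f ht)
  have hzero : HasDerivWithinAt (fun r => ∫ s in 0..r, T s f) f (Set.Ioi 0) 0 := by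
    simpa [hT.1.1] using hT.hasDerivWithinAt_integral f le_rfl
  rw [inGenerator_iff_hasDerivWithinAt hT.1.1]
  refine (hshift.sub hzero).congr (fun r hr => hT.apply_integral f (Set.mem_Ioi.1 hr).le ht) ?_
  exact hT.apply_integral f le_rfl ht

lemma InGenerator.const_smul {f g : E} (hfg : InGenerator T f g) (c : ℝ) :
    InGenerator T (c • f) (c • g) :=
  (Tendsto.const_smul hfg c).congr fun t => by rw [map_smul, ← smul_sub, smul_comm]

lemma IsC0Semigroup.dense_inGenerator [CompleteSpace E] (hT : IsC0Semigroup T) :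
    Dense {f : E | ∃ g, InGenerator T f g} := by
  intro f
  have hmean : Tendsto (fun r : ℝ => r⁻¹ • ∫ s in 0..r, T s f) (𝓝[>] 0) (𝓝 f) := by
    have := (hasDerivWithinAt_iff_tendsto_slope' (by simp)).1
      (hT.hasDerivWithinAt_integral f le_rfl)
    simpa [slope_fun_def, hT.1.1] using this
  refine mem_closure_of_tendsto hmean ?_
  filter_upwards [self_mem_nhdsWithin] with r (hr : 0 < r)
  exact ⟨_, (hT.inGenerator_integral f hr.le).const_smul r⁻¹⟩

end Semigroup

section Perturbation

variable {E : Type*} [NormedAddCommGroup E] [NormedSpace ℝ E] {R S T : ℝ → E →L[ℝ] E}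
  {B C : E →L[ℝ] E}

/-- The generator of `S` is `A - B`, where `A` is the generator of `T` and `B` is a bounded
operator. The condition is phrased on graphs of generators, without naming the domain of `A`. -/
def HasGeneratorSub (T S : ℝ → E →L[ℝ] E) (B : E →L[ℝ] E) : Prop :=
  ∀ f g, InGenerator S f g ↔ InGenerator T f (g + B f)

lemma HasGeneratorSub.sub (hS : HasGeneratorSub T S B) (hR : HasGeneratorSub T R C) :
    HasGeneratorSub S R (C - B) := fun f g => by
  rw [hR, hS, sub_apply, add_assoc, sub_add_cancel]

lemma IsC0Semigroup.exp_smul (hT : IsC0Semigroup T) (c : ℝ) :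
    IsC0Semigroup fun t => Real.exp (-c * t) • T t := by
  refine ⟨⟨by simp [hT.1.1], fun s t hs ht => ?_⟩, fun f => ?_⟩
  · ext f
    simp [hT.1.apply_add hs ht, mul_add, Real.exp_add, smul_smul, mul_comm]
  · have hexp : Continuous fun t : ℝ => Real.exp (-c * t) := by fun_prop
    exact hexp.continuousOn.smul (hT.2 f)

lemma InGenerator.exp_smul (hT : T 0 = ContinuousLinearMap.id ℝ E) {f g : E}
    (hfg : InGenerator T f g) (c : ℝ) :
    InGenerator (fun t => Real.exp (-c * t) • T t) f (g - c • f) := by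
  have hexp : HasDerivAt (fun t : ℝ => Real.exp (-c * t)) (-c) 0 := by
    simpa using ((hasDerivAt_id (0 : ℝ)).const_mul (-c)).exp
  rw [inGenerator_iff_hasDerivWithinAt hT] at hfg
  rw [inGenerator_iff_hasDerivWithinAt (by simp [hT])]
  have hprod := hexp.hasDerivWithinAt.smul hfg
  simp only [mul_zero, Real.exp_zero, one_smul, hT, ContinuousLinearMap.id_apply, neg_smul,
    ← sub_eq_add_neg] at hprod
  exact hprod

lemma hasGeneratorSub_exp_smul (hT : T 0 = ContinuousLinearMap.id ℝ E) (c : ℝ) :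
    HasGeneratorSub T (fun t => Real.exp (-c * t) • T t) (c • ContinuousLinearMap.id ℝ E) := by
  refine fun f g => ⟨fun hfg => ?_, fun hfg => ?_⟩
  · have hback := hfg.exp_smul (by simp [hT]) (-c)
    simpa [smul_smul, ← Real.exp_add] using hback
  · simpa using hfg.exp_smul hT c

lemma HasGeneratorSub.hasDerivWithinAt_apply_sub_apply [CompleteSpace E] (hT : IsC0Semigroup T)
    (hS : IsC0Semigroup S) (h : HasGeneratorSub T S B) {f g : E} (hfg : InGenerator T f g)
    {s t : ℝ} (hs : 0 ≤ s) (hst : s < t) :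
    HasDerivWithinAt (fun r => S (t - r) (T r f)) (S (t - s) (B (T s f))) (Set.Ioi s) s := by
  have hTs := hT.1.inGenerator_apply hfg hs
  have hSs : InGenerator S (T s f) (T s g - B (T s f)) := by rwa [h, sub_add_cancel]
  rw [inGenerator_iff_hasDerivWithinAt hT.1.1] at hTs
  rw [inGenerator_iff_hasDerivWithinAt hS.1.1] at hSs
  have hdiff := hasDerivWithinAt_Ioi_comp_add_const (a := s) (c := -s)
    (by simpa only [add_neg_cancel] using hTs.sub hSs)
  rw [sub_sub_self] at hdiff
  rw [hasDerivWithinAt_iff_tendsto_slope' (by simp)] at hdiff ⊢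
  have htime : Tendsto (fun r => t - r) (𝓝[>] s) (𝓝[Set.Ici 0] (t - s)) := by
    refine tendsto_nhdsWithin_iff.2 ⟨?_, ?_⟩
    · exact ((continuous_const.sub continuous_id).tendsto s).mono_left nhdsWithin_le_nhds
    · filter_upwards [Ioo_mem_nhdsGT hst] with r hr using sub_nonneg.2 hr.2.le
  refine (hS.tendsto_apply (sub_nonneg.2 hst.le) htime hdiff).congr' ?_
  filter_upwards [Ioo_mem_nhdsGT hst] with r ⟨hsr, hrt⟩
  have hTr : T r f = T (r - s) (T s f) := by
    rw [← hT.1.apply_add (sub_nonneg.2 hsr.le) hs, sub_add_cancel]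
  have hSt : S (t - s) (T s f) = S (t - r) (S (r - s) (T s f)) := by
    rw [← hS.1.apply_add (sub_nonneg.2 hrt.le) (sub_nonneg.2 hsr.le), sub_add_sub_cancel]
  simp [slope_def_module, ← sub_eq_add_neg, hTr, hSt, hT.1.1, hS.1.1]

lemma HasGeneratorSub.sub_eq_integral [CompleteSpace E] (hT : IsC0Semigroup T)
    (hS : IsC0Semigroup S) (h : HasGeneratorSub T S B) {t : ℝ} (ht : 0 ≤ t) (f : E) :
    T t f - S t f = ∫ s in 0..t, S (t - s) (B (T s f)) := by
  have hcont : ContinuousOn (fun q : E × ℝ => T q.2 q.1) (Set.univ ×ˢ Set.Icc 0 t) :=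
    hT.continuousOn_apply continuousOn_snd (fun q hq => hq.2.1) continuousOn_fst
  have hcontS {u : E × ℝ → E} (hu : ContinuousOn u (Set.univ ×ˢ Set.Icc 0 t)) :
      ContinuousOn (fun q : E × ℝ => S (t - q.2) (u q)) (Set.univ ×ˢ Set.Icc 0 t) :=
    hS.continuousOn_apply (continuousOn_const.sub continuousOn_snd)
      (fun q hq => sub_nonneg.2 hq.2.2) hu
  have hslice {F : E × ℝ → E} (hF : ContinuousOn F (Set.univ ×ˢ Set.Icc 0 t)) (f : E) :
      ContinuousOn (fun s => F (f, s)) (Set.Icc 0 t) :=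
    hF.comp (by fun_prop) fun s hs => ⟨trivial, hs⟩
  have hintegrand : ContinuousOn (Function.uncurry fun f s => S (t - s) (B (T s f)))
      (Set.univ ×ˢ Set.Icc 0 t) := hcontS (B.continuous.comp_continuousOn hcont)
  refine congrFun (Continuous.ext_on hT.dense_inGenerator
    ((T t).continuous.sub (S t).continuous)
    (continuous_intervalIntegral_of_continuousOn ht hintegrand) ?_) f
  rintro f ⟨g, hfg⟩
  have hFTC := intervalIntegral.integral_eq_sub_of_hasDeriv_right_of_le ht
    (hslice (hcontS hcont) f)
    (fun s hs => h.hasDerivWithinAt_apply_sub_apply hT hS hfg hs.1.le hs.2)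
    ((hslice hintegrand f).intervalIntegrable_of_Icc ht)
  simpa [hT.1.1, hS.1.1] using hFTC.symm

end Perturbation

section Positivity

variable {E : Type*} [NormedAddCommGroup E] [NormedSpace ℝ E]

/-- Positivity of a bounded operator on an ordered Banach space. -/
def IsPositiveOp [PartialOrder E] (B : E →L[ℝ] E) : Prop :=
  ∀ f, 0 ≤ f → 0 ≤ B f

variable {R S T : ℝ → E →L[ℝ] E} {B K : E →L[ℝ] E} [CompleteSpace E] [Lattice E]
  [HasSolidNorm E] [IsOrderedAddMonoid E] [IsOrderedModule ℝ E]

lemma HasGeneratorSub.negPart_apply_le_integral (hS : IsC0Semigroup S) (hR : IsC0Semigroup R)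
    (h : HasGeneratorSub S R K) (hRpos : ∀ t, 0 ≤ t → IsPositiveOp (R t)) (hK : IsPositiveOp K)
    {f : E} (hf : 0 ≤ f) {t : ℝ} (ht : 0 ≤ t) :
    (S t f)⁻ ≤ ∫ s in 0..t, R (t - s) (K (S s f)⁻) := by
  have hpos : ∀ s ∈ Set.Icc 0 t, ∀ x, 0 ≤ x → 0 ≤ R (t - s) (K x) := fun s hs x hx =>
    hRpos _ (sub_nonneg.2 hs.2) _ (hK x hx)
  have horbit : ContinuousOn (fun s => S s f) (Set.Icc 0 t) :=
    (hS.2 f).mono Set.Icc_subset_Ici_self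
  have hint {u : ℝ → E} (hu : ContinuousOn u (Set.Icc 0 t)) :
      IntervalIntegrable (fun s => R (t - s) (K (u s))) volume 0 t :=
    (hR.continuousOn_apply (continuousOn_const.sub continuousOn_id)
      (fun s hs => sub_nonneg.2 hs.2) (K.continuous.comp_continuousOn hu)).intervalIntegrable_of_Icc
      ht
  have hnegPart : ContinuousOn (fun s => (S s f)⁻) (Set.Icc 0 t) :=
    continuous_negPart.comp_continuousOn horbit
  have hnonneg : 0 ≤ (S t f - R t f) + ∫ s in 0..t, R (t - s) (K (S s f)⁻) := by
    rw [h.sub_eq_integral hS hR ht,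
      ← intervalIntegral.integral_add (hint horbit) (hint hnegPart)]
    refine intervalIntegral_nonneg_of_forall_Icc ht fun s hs => ?_
    rw [← map_add, ← map_add]
    exact hpos s hs _ (neg_le_iff_add_nonneg.1 (neg_le.1 (neg_le_negPart _)))
  refine sup_le ?_ (intervalIntegral_nonneg_of_forall_Icc ht fun s hs =>
    hpos s hs _ (negPart_nonneg _))
  rw [neg_le_iff_add_nonneg']
  rw [sub_add_eq_add_sub] at hnonneg
  simpa only [sub_add_cancel] using add_nonneg hnonneg (hRpos t ht f hf)

lemma HasGeneratorSub.isPositiveOp_of_isPositiveOp (hS : IsC0Semigroup S) (hR : IsC0Semigroup R)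
    (h : HasGeneratorSub S R K) (hRpos : ∀ t, 0 ≤ t → IsPositiveOp (R t)) (hK : IsPositiveOp K)
    {t : ℝ} (ht : 0 ≤ t) : IsPositiveOp (S t) := by
  intro f hf
  obtain ⟨M, hM⟩ := hR.exists_norm_le t
  have hcont : ContinuousOn (fun r => ‖(S r f)⁻‖) (Set.Icc 0 t) :=
    (continuous_negPart.comp_continuousOn ((hS.2 f).mono Set.Icc_subset_Ici_self)).norm
  have hbound : ∀ r ∈ Set.Icc 0 t, ‖(S r f)⁻‖ ≤ M * ‖K‖ * ∫ s in 0..r, ‖(S s f)⁻‖ := by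
    intro r hr
    calc ‖(S r f)⁻‖ ≤ ‖∫ s in 0..r, R (r - s) (K (S s f)⁻)‖ := by
          have hle := h.negPart_apply_le_integral hS hR hRpos hK hf hr.1
          refine norm_le_norm_of_abs_le_abs ?_
          rwa [abs_of_nonneg (negPart_nonneg _), abs_of_nonneg ((negPart_nonneg _).trans hle)]
      _ ≤ ∫ s in 0..r, M * ‖K‖ * ‖(S s f)⁻‖ := by
          refine intervalIntegral.norm_integral_le_of_norm_le hr.1 (ae_of_all _ fun s hs => ?_)
            (((hcont.mono (Set.Icc_subset_Icc_right hr.2)).const_mul _).intervalIntegrable_of_Icc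
              hr.1)
          rw [mul_assoc]
          have hrs : r - s ∈ Set.Icc 0 t :=
            ⟨sub_nonneg.2 hs.2, (sub_le_self r hs.1.le).trans hr.2⟩
          exact (R (r - s)).le_of_opNorm_le_of_le (hM _ hrs) (K.le_opNorm _)
      _ = M * ‖K‖ * ∫ s in 0..r, ‖(S s f)⁻‖ := intervalIntegral.integral_const_mul _ _
  have hzero := eq_zero_of_le_mul_integral hcont (fun _ _ => norm_nonneg _) hbound t ⟨ht, le_rfl⟩
  exact negPart_eq_zero.1 (norm_eq_zero.1 hzero)

lemma HasGeneratorSub.isPositiveOp (hT : IsC0Semigroup T) (hS : IsC0Semigroup S)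
    (h : HasGeneratorSub T S B) (hTpos : ∀ t, 0 ≤ t → IsPositiveOp (T t)) {c : ℝ}
    (hB : IsPositiveOp (c • ContinuousLinearMap.id ℝ E - B)) {t : ℝ} (ht : 0 ≤ t) :
    IsPositiveOp (S t) :=
  (h.sub (hasGeneratorSub_exp_smul hT.1.1 c)).isPositiveOp_of_isPositiveOp hS (hT.exp_smul c)
    (fun s hs f hf => smul_nonneg (Real.exp_pos _).le (hTpos s hs f hf)) hB ht

lemma HasGeneratorSub.apply_le_apply (hT : IsC0Semigroup T) (hS : IsC0Semigroup S)
    (h : HasGeneratorSub T S B) (hTpos : ∀ t, 0 ≤ t → IsPositiveOp (T t))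
    (hSpos : ∀ t, 0 ≤ t → IsPositiveOp (S t)) (hB : IsPositiveOp B) {t : ℝ} (ht : 0 ≤ t) {f : E}
    (hf : 0 ≤ f) : S t f ≤ T t f := by
  rw [← sub_nonneg, h.sub_eq_integral hT hS ht]
  exact intervalIntegral_nonneg_of_forall_Icc ht fun s hs =>
    hSpos _ (sub_nonneg.2 hs.2) _ (hB _ (hTpos s hs.1 f hf))

end Positivity

section MonotoneLimit

variable {E : Type*} [NormedAddCommGroup E] [NormedSpace ℝ E] [CompleteSpace E] [Lattice E]
  [IsOrderedAddMonoid E]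

lemma exists_tendsto_of_antitone_of_isPositiveOp
    (hconv : ∀ u : ℕ → E, Antitone u → (∀ n, 0 ≤ u n) → ∃ x, Tendsto u atTop (𝓝 x))
    {A : ℕ → E →L[ℝ] E} (hpos : ∀ n, IsPositiveOp (A n))
    (hanti : ∀ f, 0 ≤ f → Antitone fun n => A n f) :
    ∃ L : E →L[ℝ] E, ∀ f, Tendsto (fun n => A n f) atTop (𝓝 (L f)) := by
  have hcone : ∀ f, 0 ≤ f → ∃ x, Tendsto (fun n => A n f) atTop (𝓝 x) := fun f hf =>
    hconv _ (hanti f hf) fun n => hpos n f hf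
  have hlim : ∀ f, ∃ x, Tendsto (fun n => A n f) atTop (𝓝 x) := by
    intro f
    obtain ⟨x, hx⟩ := hcone f⁺ (posPart_nonneg f)
    obtain ⟨y, hy⟩ := hcone f⁻ (negPart_nonneg f)
    refine ⟨x - y, (hx.sub hy).congr fun n => ?_⟩
    rw [← map_sub, posPart_sub_negPart]
  choose L hL using hlim
  exact ⟨continuousLinearMapOfTendsto A (tendsto_pi_nhds.2 hL), hL⟩

theorem exists_isSemigroup_tendsto_of_hasGeneratorSub [HasSolidNorm E] [IsOrderedModule ℝ E]
    (hconv : ∀ u : ℕ → E, Antitone u → (∀ n, 0 ≤ u n) → ∃ x, Tendsto u atTop (𝓝 x))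
    {T : ℝ → E →L[ℝ] E} {S : ℕ → ℝ → E →L[ℝ] E} {B : ℕ → E →L[ℝ] E}
    (hT : IsC0Semigroup T) (hTpos : ∀ t, 0 ≤ t → IsPositiveOp (T t))
    (hS : ∀ n, IsC0Semigroup (S n)) (hgen : ∀ n, HasGeneratorSub T (S n) (B n))
    (hbdd : ∀ n, ∃ c : ℝ, IsPositiveOp (c • ContinuousLinearMap.id ℝ E - B n))
    (hmono : ∀ n, IsPositiveOp (B (n + 1) - B n)) :
    ∃ TV : ℝ → E →L[ℝ] E,
      (∀ t, 0 ≤ t → ∀ f, Tendsto (fun n => S n t f) atTop (𝓝 (TV t f))) ∧ IsSemigroup TV := by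
  have hpos : ∀ n t, 0 ≤ t → IsPositiveOp (S n t) := fun n t ht => by
    obtain ⟨c, hc⟩ := hbdd n
    exact (hgen n).isPositiveOp hT (hS n) hTpos hc ht
  have hanti : ∀ t, 0 ≤ t → ∀ f, 0 ≤ f → Antitone fun n => S n t f := fun t ht f hf =>
    antitone_nat_of_succ_le fun n => ((hgen n).sub (hgen (n + 1))).apply_le_apply (hS n)
      (hS (n + 1)) (hpos n) (hpos (n + 1)) (hmono n) ht hf
  have hlim : ∀ t, 0 ≤ t → ∃ L : E →L[ℝ] E, ∀ f, Tendsto (fun n => S n t f) atTop (𝓝 (L f)) :=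
    fun t ht => exists_tendsto_of_antitone_of_isPositiveOp hconv (fun n => hpos n t ht)
      (hanti t ht)
  choose! TV hTV using hlim
  exact ⟨TV, hTV, IsSemigroup.of_tendsto (fun n => (hS n).1) hTV⟩

end MonotoneLimit

section LpOrder

variable {Ω : Type*} [MeasurableSpace Ω] {μ : Measure Ω} {p : ℝ≥0∞}

instance instIsOrderedModuleLp {E : Type*} [NormedAddCommGroup E] [NormedSpace ℝ E]
    [PartialOrder E] [IsOrderedAddMonoid E] [IsOrderedModule ℝ E] :
    IsOrderedModule ℝ (Lp E p μ) :=
  .of_smul_nonneg fun c hc f hf => by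
    rw [← Lp.coeFn_nonneg] at hf ⊢
    filter_upwards [hf, Lp.coeFn_smul c f] with ω hfω hcf
    rw [hcf]
    exact smul_nonneg hc hfω

lemma norm_rpow_add_norm_rpow_le_norm_add_rpow [Fact (1 ≤ p)] (hp : p ≠ ∞) {f g : Lp ℝ p μ}
    (hf : 0 ≤ f) (hg : 0 ≤ g) : ‖f‖ ^ p.toReal + ‖g‖ ^ p.toReal ≤ ‖f + g‖ ^ p.toReal := by
  have hp₀ : p ≠ 0 := (zero_lt_one.trans_le Fact.out).ne'
  have hp₁ : 1 ≤ p.toReal := by simpa using ENNReal.toReal_mono hp (Fact.out : 1 ≤ p)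
  have hpos : 0 < p.toReal := zero_lt_one.trans_le hp₁
  have hnorm : ∀ h : Lp ℝ p μ,
      ENNReal.ofReal (‖h‖ ^ p.toReal) = ∫⁻ ω, ‖h ω‖ₑ ^ p.toReal ∂μ := by
    intro h
    rw [← ENNReal.ofReal_rpow_of_nonneg (norm_nonneg h) hpos.le, ofReal_norm,
      Lp.enorm_def, eLpNorm_eq_lintegral_rpow_enorm_toReal hp₀ hp, ← ENNReal.rpow_mul,
      one_div_mul_cancel hpos.ne', ENNReal.rpow_one]
  rw [← ENNReal.ofReal_le_ofReal_iff (by positivity),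
    ENNReal.ofReal_add (by positivity) (by positivity), hnorm, hnorm, hnorm,
    ← lintegral_add_left' ((Lp.aestronglyMeasurable f).enorm.pow_const _)]
  refine lintegral_mono_ae ?_
  rw [← Lp.coeFn_nonneg] at hf hg
  filter_upwards [hf, hg, Lp.coeFn_add f g] with ω (hfω : 0 ≤ f ω) (hgω : 0 ≤ g ω) hadd
  calc ‖f ω‖ₑ ^ p.toReal + ‖g ω‖ₑ ^ p.toReal ≤ (‖f ω‖ₑ + ‖g ω‖ₑ) ^ p.toReal :=
        ENNReal.add_rpow_le_rpow_add _ _ hp₁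
    _ = ‖(f + g) ω‖ₑ ^ p.toReal := by
        rw [hadd, Pi.add_apply, Real.enorm_of_nonneg hfω, Real.enorm_of_nonneg hgω,
          Real.enorm_of_nonneg (add_nonneg hfω hgω), ENNReal.ofReal_add hfω hgω]

lemma exists_tendsto_of_antitone_of_nonneg [Fact (1 ≤ p)] (hp : p ≠ ∞) {ι : Type*}
    [SemilatticeSup ι] [Nonempty ι] {u : ι → Lp ℝ p μ} (hu : Antitone u) (hu₀ : ∀ i, 0 ≤ u i) :
    ∃ f, Tendsto u atTop (𝓝 f) := by
  have hp₀ : 0 < p.toReal := ENNReal.toReal_pos (zero_lt_one.trans_le Fact.out).ne' hp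
  have hgap : ∀ {i j}, i ≤ j →
      ‖u i - u j‖ ^ p.toReal ≤ ‖u i‖ ^ p.toReal - ‖u j‖ ^ p.toReal := fun {i j} hij => by
    have h := norm_rpow_add_norm_rpow_le_norm_add_rpow hp (sub_nonneg.2 (hu hij)) (hu₀ j)
    rwa [sub_add_cancel, ← le_sub_iff_add_le] at h
  have hanti : Antitone fun i => ‖u i‖ ^ p.toReal := fun i j hij =>
    sub_nonneg.1 ((Real.rpow_nonneg (norm_nonneg _) _).trans (hgap hij))
  have hbdd : BddBelow (Set.range fun i => ‖u i‖ ^ p.toReal) :=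
    ⟨0, Set.forall_mem_range.2 fun i => Real.rpow_nonneg (norm_nonneg _) _⟩
  have hcauchy := (tendsto_atTop_ciInf hanti hbdd).cauchySeq
  refine cauchySeq_tendsto_of_complete (Metric.cauchySeq_iff'.2 fun ε hε => ?_)
  obtain ⟨N, hN⟩ := Metric.cauchySeq_iff'.1 hcauchy (ε ^ p.toReal) (by positivity)
  refine ⟨N, fun i hi => ?_⟩
  rw [dist_comm, dist_eq_norm]
  rw [← Real.rpow_lt_rpow_iff (norm_nonneg _) hε.le hp₀]
  refine (hgap hi).trans_lt ((le_abs_self _).trans_lt ?_)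
  simpa only [dist_comm, Real.dist_eq] using hN i hi

end LpOrder

section LocallyMeasurable

variable {Ω α β : Type*} [MeasurableSpace Ω] [MeasurableSpace α] [MeasurableSpace β]
  {μ : Measure Ω} {V : Ω → α}

lemma LocallyMeasurable.comp_measurable (hV : LocallyMeasurable μ V) {φ : α → β}
    (hφ : Measurable φ) : LocallyMeasurable μ fun ω => φ (V ω) := fun s hs hμs => by
  obtain ⟨g, hg, hVg⟩ := hV s hs hμs
  exact ⟨fun ω => φ (g ω), hφ.comp hg, hVg.mono fun ω hω => congrArg φ hω⟩

lemma LocallyMeasurable.aemeasurable_restrict (hV : LocallyMeasurable μ V) {s : Set Ω}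
    (hs : MeasurableSet s) [SigmaFinite (μ.restrict s)] : AEMeasurable V (μ.restrict s) := by
  let A : ℕ → Set Ω := spanningSets (μ.restrict s)
  have hcover : ⋃ k, A k ∩ s = s := by
    rw [← Set.iUnion_inter, iUnion_spanningSets, Set.univ_inter]
  rw [← hcover, aemeasurable_iUnion_iff]
  intro k
  have hAk : MeasurableSet (A k) := measurableSet_spanningSets _ k
  refine hV _ (hAk.inter hs) ?_
  rw [← Measure.restrict_apply hAk]
  exact measure_spanningSets_lt_top _ k

lemma LocallyMeasurable.aestronglyMeasurable_mul {W : Ω → ℝ} (hW : LocallyMeasurable μ W)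
    {f : Ω → ℝ} (hf : FinStronglyMeasurable f μ) :
    AEStronglyMeasurable (fun ω => W ω * f ω) μ := by
  obtain ⟨s, hs, hfs, _⟩ := hf.exists_set_sigmaFinite
  have hsupp : (fun ω => W ω * f ω) = s.indicator fun ω => W ω * f ω :=
    (Set.indicator_eq_self.2 (Function.support_subset_iff'.2 fun ω hω => by
      rw [hfs ω hω, mul_zero])).symm
  rw [hsupp, aestronglyMeasurable_indicator_iff hs]
  exact (hW.aemeasurable_restrict hs).aestronglyMeasurable.mul
    hf.stronglyMeasurable.aestronglyMeasurable

end LocallyMeasurable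

section Multiplication

variable {Ω : Type*} [MeasurableSpace Ω] {μ : Measure Ω} {p : ℝ≥0∞} [Fact (1 ≤ p)]
  {B B' : Lp ℝ p μ →L[ℝ] Lp ℝ p μ} {W W' : Ω → ℝ} {c : ℝ}

/-- `B` is the operator of multiplication by the function `W` on `L_p(μ)`. -/
def IsMulOp (B : Lp ℝ p μ →L[ℝ] Lp ℝ p μ) (W : Ω → ℝ) : Prop :=
  ∀ f, ⇑(B f) =ᵐ[μ] fun ω => W ω * f ω

lemma IsMulOp.sub (hB : IsMulOp B W) (hB' : IsMulOp B' W') :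
    IsMulOp (B - B') fun ω => W ω - W' ω := fun f => by
  filter_upwards [hB f, hB' f, Lp.coeFn_sub (B f) (B' f)] with ω h h' hsub
  rw [sub_apply, hsub, Pi.sub_apply, h, h', sub_mul]

lemma isMulOp_smul_id (c : ℝ) :
    IsMulOp (c • ContinuousLinearMap.id ℝ (Lp ℝ p μ)) fun _ => c := fun f =>
  Lp.coeFn_smul c f

lemma IsMulOp.isPositiveOp (hB : IsMulOp B W) (hW : ∀ ω, 0 ≤ W ω) : IsPositiveOp B := by
  intro f hf
  rw [← Lp.coeFn_nonneg] at hf ⊢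
  filter_upwards [hf, hB f] with ω hfω hBω
  rw [hBω]
  exact mul_nonneg (hW ω) hfω

lemma exists_isMulOp (hp : p ≠ ∞) (hW : LocallyMeasurable μ W) (hc : ∀ ω, ‖W ω‖ ≤ c) :
    ∃ B : Lp ℝ p μ →L[ℝ] Lp ℝ p μ, IsMulOp B W := by
  have hbound (f : Lp ℝ p μ) (ω : Ω) : ‖W ω * f ω‖ ≤ c * ‖f ω‖ := by
    rw [norm_mul]
    exact mul_le_mul_of_nonneg_right (hc ω) (norm_nonneg _)
  have hmem (f : Lp ℝ p μ) : MemLp (fun ω => W ω * f ω) p μ :=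
    (Lp.memLp f).of_le_mul (hW.aestronglyMeasurable_mul
      (Lp.finStronglyMeasurable f (zero_lt_one.trans_le Fact.out).ne' hp)) (ae_of_all _ (hbound f))
  have hcoe (f : Lp ℝ p μ) : ⇑((hmem f).toLp _) =ᵐ[μ] fun ω => W ω * f ω := (hmem f).coeFn_toLp
  let L : Lp ℝ p μ →ₗ[ℝ] Lp ℝ p μ :=
    { toFun := fun f => (hmem f).toLp _
      map_add' := fun f g => Lp.ext <| by
        filter_upwards [hcoe (f + g), hcoe f, hcoe g, Lp.coeFn_add f g,
          Lp.coeFn_add ((hmem f).toLp _) ((hmem g).toLp _)] with ω hfg hf hg hadd hadd'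
        rw [hfg, hadd', Pi.add_apply, hf, hg, hadd, Pi.add_apply, mul_add]
      map_smul' := fun a f => Lp.ext <| by
        filter_upwards [hcoe (a • f), hcoe f, Lp.coeFn_smul a f,
          Lp.coeFn_smul a ((hmem f).toLp _)] with ω haf hf hsmul hsmul'
        rw [haf, RingHom.id_apply, hsmul', Pi.smul_apply, hf, hsmul, Pi.smul_apply,
          mul_smul_comm] }
  refine ⟨L.mkContinuous c fun f => Lp.norm_le_mul_norm_of_ae_le_mul ?_, hcoe⟩
  filter_upwards [hcoe f] with ω hω
  exact (congrArg norm hω).trans_le (hbound f ω)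

lemma IsPerturbedSG.hasGeneratorSub {T S : ℝ → Lp ℝ p μ →L[ℝ] Lp ℝ p μ}
    (hS : IsPerturbedSG μ p T S W) (hB : IsMulOp B W) : HasGeneratorSub T S B := by
  intro f g
  have hgraph : ∀ g₀ : Lp ℝ p μ, (⇑g =ᵐ[μ] fun ω => g₀ ω - W ω * f ω) ↔ g₀ = g + B f := by
    intro g₀
    have hsub : ⇑(g₀ - B f) =ᵐ[μ] fun ω => g₀ ω - W ω * f ω := by
      filter_upwards [Lp.coeFn_sub g₀ (B f), hB f] with ω h hBω
      rw [h, Pi.sub_apply, hBω]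
    rw [← sub_eq_iff_eq_add, eq_comm, Lp.ext_iff]
    exact ⟨fun h => h.trans hsub.symm, fun h => h.trans hsub⟩
  simp only [hS.2, hgraph, exists_eq_right]

end Multiplication

section Truncation

variable {Ω : Type*} {V : Ω → ℝ≥0∞}

lemma norm_trunc_le (V : Ω → ℝ≥0∞) (n : ℕ) (ω : Ω) : ‖trunc V n ω‖ ≤ n := by
  rw [trunc, Real.norm_of_nonneg ENNReal.toReal_nonneg]
  simpa using ENNReal.toReal_mono (ENNReal.natCast_ne_top n) (min_le_right (V ω) n)

lemma monotone_trunc (V : Ω → ℝ≥0∞) : Monotone (trunc V) := fun _ n hmn _ =>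
  ENNReal.toReal_mono (ne_top_of_le_ne_top (ENNReal.natCast_ne_top n) (min_le_right _ _))
    (min_le_min_left _ (Nat.cast_le.2 hmn))

lemma LocallyMeasurable.trunc [MeasurableSpace Ω] {μ : Measure Ω} (hV : LocallyMeasurable μ V)
    (n : ℕ) : LocallyMeasurable μ (trunc V n) :=
  hV.comp_measurable (measurable_id.min measurable_const).ennreal_toReal

end Truncation

end Absorption

theorem statement10_general {Ω : Type*} [MeasurableSpace Ω] {μ : Measure Ω} {p : ℝ≥0∞}
    [Fact (1 ≤ p)] (hp : p ≠ ∞) {T : ℝ → Lp ℝ p μ →L[ℝ] Lp ℝ p μ} (hT : IsC0Semigroup T)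
    (hTpos : IsPositiveSG T) {W : ℕ → Ω → ℝ} (hWmeas : ∀ n, LocallyMeasurable μ (W n))
    (hWbdd : ∀ n, ∃ c, ∀ ω, ‖W n ω‖ ≤ c) (hWmono : Monotone W)
    {S : ℕ → ℝ → Lp ℝ p μ →L[ℝ] Lp ℝ p μ} (hS : ∀ n, IsPerturbedSG μ p T (S n) (W n)) :
    ∃ TV : ℝ → Lp ℝ p μ →L[ℝ] Lp ℝ p μ,
      (∀ t, 0 ≤ t → ∀ f, Tendsto (fun n => S n t f) atTop (𝓝 (TV t f))) ∧ IsSemigroup TV := by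
  choose c hc using hWbdd
  choose B hB using fun n => exists_isMulOp (p := p) hp (hWmeas n) (hc n)
  have hbdd : ∀ n, ∃ c : ℝ, IsPositiveOp (c • ContinuousLinearMap.id ℝ _ - B n) := fun n =>
    ⟨c n, ((isMulOp_smul_id (c n)).sub (hB n)).isPositiveOp fun ω =>
      sub_nonneg.2 ((le_abs_self _).trans (hc n ω))⟩
  have hmono : ∀ n, IsPositiveOp (B (n + 1) - B n) := fun n =>
    ((hB (n + 1)).sub (hB n)).isPositiveOp fun ω => sub_nonneg.2 (hWmono n.le_succ ω)
  exact exists_isSemigroup_tendsto_of_hasGeneratorSub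
    (fun u hu hu₀ => exists_tendsto_of_antitone_of_nonneg hp hu hu₀) hT hTpos
    (fun n => (hS n).1) (fun n => (hS n).hasGeneratorSub (hB n)) hbdd hmono

/-- For every locally measurable `V : Ω → [0,∞]`, the strong limit
`T_V(t) = s-lim_{n→∞} e^{t(A−V∧n)}` exists for every `t ≥ 0`, and `(T_V(t))_{t≥0}` is a
one-parameter semigroup: `T_V(0) = I` and `T_V(s+t) = T_V(s)T_V(t)` for `s, t ≥ 0`. -/
theorem statement10
    {Ω : Type*} [MeasurableSpace Ω] (μ : Measure Ω) (p : ℝ≥0∞) [Fact (1 ≤ p)] (hp : p ≠ ∞)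
    (T : ℝ → Lp ℝ p μ →L[ℝ] Lp ℝ p μ)
    (hT : IsC0Semigroup T) (hTpos : IsPositiveSG T)
    (V : Ω → ℝ≥0∞) (hVmeas : LocallyMeasurable μ V)
    -- the perturbed semigroups `e^{t(A − V∧n)}`
    (S : ℕ → ℝ → Lp ℝ p μ →L[ℝ] Lp ℝ p μ)
    (hS : ∀ n : ℕ, IsPerturbedSG μ p T (S n) (trunc V n)) :
    ∃ TV : ℝ → Lp ℝ p μ →L[ℝ] Lp ℝ p μ,
      -- the strong limit exists for every `t ≥ 0` …
      (∀ t : ℝ, 0 ≤ t → ∀ f : Lp ℝ p μ,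
        Tendsto (fun n : ℕ => S n t f) atTop (𝓝 (TV t f))) ∧
      -- … and defines a one-parameter semigroup
      TV 0 = ContinuousLinearMap.id ℝ (Lp ℝ p μ) ∧
      (∀ s t : ℝ, 0 ≤ s → 0 ≤ t → TV (s + t) = (TV s).comp (TV t)) :=
  statement10_general hp hT hTpos (fun n => hVmeas.trunc n) (fun n => ⟨n, norm_trunc_le V n⟩)
    (monotone_trunc V) hS
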